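/- For each δ > 0 there exists ε_* > 0 such that every normalised self-similar profile φ_ε for K_ε with ε ∈ (0, ε_*) satisfies ∫₀^∞ |φ_ε(x) − e^{−x}| dx < δ. -/

import Mathlib

open MeasureTheory Real Set Filter

noncomputable def weight (a b x : ℝ) : ℝ := if x ≤ 1 then x ^ a else x ^ b

noncomputable def Xnorm (a b : ℝ) (g : ℝ → ℝ) : ℝ :=
  ∫ x in Ioi (0:ℝ), |g x| * weight a b x

def MemX (a b : ℝ) (g : ℝ → ℝ) : Prop :=
  IntegrableOn (fun x => g x * weight a b x) (Ioi 0)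

noncomputable def Kern (ε : ℝ) (W : ℝ → ℝ → ℝ) (x y : ℝ) : ℝ := 2 + ε * W x y

def GoodW (α : ℝ) (W : ℝ → ℝ → ℝ) : Prop :=
  ContinuousOn (fun p : ℝ × ℝ => W p.1 p.2) (Ioi 0 ×ˢ Ioi 0) ∧
  (∀ x y : ℝ, 0 < x → 0 < y → W x y = W y x) ∧
  (∀ l x y : ℝ, 0 < l → 0 < x → 0 < y → W (l * x) (l * y) = W x y) ∧
  (∀ x y : ℝ, 0 < x → 0 < y → 0 ≤ W x y ∧ W x y ≤ (x / y) ^ α + (y / x) ^ α)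

def IsProfile (K : ℝ → ℝ → ℝ) (φ : ℝ → ℝ) : Prop :=
  LocallyIntegrableOn φ (Ioi 0) ∧
  (∀ᵐ x ∂(volume.restrict (Ioi (0:ℝ))), 0 ≤ φ x) ∧
  IntegrableOn (fun x => x * φ x) (Ioi 0) ∧
  (∀ᵐ x ∂(volume.restrict (Ioi (0:ℝ))),
    x ^ 2 * φ x = ∫ y in Ioo 0 x, ∫ z in Ioi (x - y), y * K y z * φ y * φ z)

def IsNormalised (φ : ℝ → ℝ) : Prop := ∫ x in Ioi (0:ℝ), x * φ x = 1

noncomputable def aF (p x : ℝ) : ℝ := 1 - exp (-(p * x))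
noncomputable def hF (p x : ℝ) : ℝ := (1 - exp (-(p * x)) - p * x * exp (-(p * x))) / x ^ 2
noncomputable def gF (p x : ℝ) : ℝ := (1 - exp (-(p * x))) / x

lemma aF_nonneg {p x : ℝ} (hp : 0 < p) (hx : 0 ≤ x) : 0 ≤ aF p x := by
  unfold aF
  have : exp (-(p * x)) ≤ 1 := by
    rw [exp_le_one_iff]; nlinarith [mul_nonneg hp.le hx]
  linarith

lemma aF_pos {p x : ℝ} (hp : 0 < p) (hx : 0 < x) : 0 < aF p x := by
  unfold aF
  have : exp (-(p * x)) < 1 := by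
    rw [exp_lt_one_iff]; nlinarith [mul_pos hp hx]
  linarith

lemma aF_le_one (p x : ℝ) : aF p x ≤ 1 := by
  unfold aF
  linarith [exp_pos (-(p * x))]

lemma aF_le (p x : ℝ) : aF p x ≤ p * x := by
  unfold aF
  linarith [add_one_le_exp (-(p * x))]

lemma hF_pos {p x : ℝ} (hp : 0 < p) (hx : 0 < x) : 0 < hF p x := by
  unfold hF
  apply div_pos _ (by positivity)
  have h1 : p * x ≠ 0 := (mul_pos hp hx).ne'
  have h2 := add_one_lt_exp h1
  have h3 : exp (p * x) * exp (-(p * x)) = 1 := by rw [← exp_add]; simp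
  nlinarith [exp_pos (-(p * x))]

lemma gF_deriv (p : ℝ) {x : ℝ} (hx : 0 < x) : HasDerivAt (gF p) (-(hF p x)) x := by
  have h1 : HasDerivAt (fun x => exp (-(p * x))) (exp (-(p * x)) * (-(p * 1))) x :=
    (((hasDerivAt_id x).const_mul p).neg).exp
  have h2 := (h1.const_sub 1).div (hasDerivAt_id x) hx.ne'
  refine h2.congr_deriv ?_
  unfold hF
  simp only [id]
  ring

lemma lint_hF {p y z : ℝ} (hp : 0 < p) (hy : 0 < y) (hz : 0 < z) :
    ∫⁻ x in Ioo y (y + z), ENNReal.ofReal (hF p x) = ENNReal.ofReal (gF p y - gF p (y + z)) := by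
  have hc : ContinuousOn (hF p) (Icc y (y + z)) := by
    unfold hF
    apply ContinuousOn.div
    · fun_prop
    · fun_prop
    · intro x hx; have : 0 < x := lt_of_lt_of_le hy hx.1
      positivity
  have hle : y ≤ y + z := by linarith
  have h1 : ∫ x in y..(y + z), hF p x = gF p y - gF p (y + z) := by
    have := intervalIntegral.integral_eq_sub_of_hasDerivAt (a := y) (b := y + z)
      (f := fun x => - gF p x) (f' := hF p) (fun x hx => by
        rw [uIcc_of_le hle] at hx
        have h := (gF_deriv p (lt_of_lt_of_le hy hx.1)).neg
        rw [neg_neg] at h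
        exact h)
      (by apply ContinuousOn.intervalIntegrable; rwa [uIcc_of_le hle])
    rw [this]; ring
  rw [← h1, intervalIntegral.integral_of_le hle, restrict_Ioo_eq_restrict_Ioc]
  rw [ofReal_integral_eq_lintegral_ofReal]
  · exact (hc.integrableOn_Icc).mono_set Ioc_subset_Icc_self
  · refine (ae_restrict_iff' measurableSet_Ioc).2 (Eventually.of_forall fun x hx => ?_)
    exact (hF_pos hp (hy.trans hx.1)).le

lemma gF_sym {p y z : ℝ} (hy : 0 < y) (hz : 0 < z) :
    y * (gF p y - gF p (y + z)) + z * (gF p z - gF p (y + z)) = aF p y * aF p z := by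
  unfold gF aF
  have : y + z ≠ 0 := by positivity
  have e : exp (-(p * (y + z))) = exp (-(p * y)) * exp (-(p * z)) := by
    rw [← exp_add]; ring_nf
  rw [e]
  field_simp
  ring

lemma gF_anti {p y z : ℝ} (hp : 0 < p) (hy : 0 < y) (hz : 0 < z) :
    gF p (y + z) ≤ gF p y := by
  have : AntitoneOn (gF p) (Ioi 0) := by
    apply antitoneOn_of_deriv_nonpos (convex_Ioi 0)
    · exact fun x hx => (gF_deriv p hx).continuousAt.continuousWithinAt
    · rw [interior_Ioi]
      exact fun x hx => (gF_deriv p hx).differentiableAt.differentiableWithinAt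
    · rw [interior_Ioi]
      intro x hx
      rw [(gF_deriv p hx).deriv]
      linarith [hF_pos hp hx]
  exact this hy (show (0:ℝ) < y + z by positivity) (by linarith)

lemma measurable_hF (p : ℝ) : Measurable (hF p) := by unfold hF; fun_prop
lemma measurable_gF (p : ℝ) : Measurable (gF p) := by unfold gF; fun_prop
lemma measurable_aF (p : ℝ) : Measurable (aF p) := by unfold aF; fun_prop

lemma measSet_and {Ω : Type*} [MeasurableSpace Ω] {a b c d : Ω → ℝ} (ha : Measurable a)
    (hb : Measurable b) (hc : Measurable c) (hd : Measurable d) :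
    MeasurableSet {x | a x < b x ∧ c x < d x} := by
  have := (measurableSet_lt ha hb).inter (measurableSet_lt hc hd)
  convert this using 1
  ext x; simp

noncomputable def GG (K : ℝ → ℝ → ℝ) (f : ℝ → ℝ) (w : ℝ × ℝ) : ℝ := w.1 * K w.1 w.2 * f w.1 * f w.2

structure Core (α ε : ℝ) (K : ℝ → ℝ → ℝ) (f : ℝ → ℝ) : Prop where
  ha : α ∈ Ioo (0:ℝ) 1
  he : 0 < ε
  meas : Measurable f
  nonneg : ∀ x, 0 ≤ f x
  zero : ∀ x, x ≤ 0 → f x = 0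
  int0 : Integrable f
  int1 : Integrable (fun x => x * f x)
  mass : ∫ x, x * f x = 1
  Kmeas : Measurable (fun w : ℝ × ℝ => K w.1 w.2)
  Klow : ∀ x y, 0 < x → 0 < y → 2 ≤ K x y
  Kupp : ∀ x y, 0 < x → 0 < y → K x y ≤ 2 + ε * ((x / y) ^ α + (y / x) ^ α)
  eqn : ∀ᵐ x : ℝ, 0 < x →
    x ^ 2 * f x = ∫ y in Ioo 0 x, ∫ z in Ioi (x - y), y * K y z * f y * f z

/-- Tonelli -/
lemma tonelli {K : ℝ → ℝ → ℝ} {f : ℝ → ℝ} (fm : Measurable f) (f0 : ∀ x, x ≤ 0 → f x = 0)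
    (hf : ∀ x, 0 ≤ f x) (Km : Measurable (fun w : ℝ × ℝ => K w.1 w.2))
    (K0 : ∀ x y, 0 < x → 0 < y → 0 ≤ K x y)
    {p : ℝ} (hp : 0 < p) :
    ∫⁻ x, ENNReal.ofReal (hF p x) *
      ∫⁻ w : ℝ × ℝ, {w : ℝ × ℝ | w.1 < x ∧ x < w.1 + w.2}.indicator
        (fun w => ENNReal.ofReal (GG K f w)) w
    = ∫⁻ w : ℝ × ℝ, ENNReal.ofReal (GG K f w * (gF p w.1 - gF p (w.1 + w.2))) := by
  have Gm : Measurable (GG K f) := by unfold GG; fun_prop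
  have hm := measurable_hF p
  set U : ℝ → ℝ × ℝ → ENNReal := fun x w => {q : ℝ × (ℝ × ℝ) | q.2.1 < q.1 ∧ q.1 < q.2.1 + q.2.2}.indicator
    (fun q => ENNReal.ofReal (hF p q.1) * ENNReal.ofReal (GG K f q.2)) (x, w) with hU
  have hS : MeasurableSet {q : ℝ × (ℝ × ℝ) | q.2.1 < q.1 ∧ q.1 < q.2.1 + q.2.2} :=
    measSet_and (by fun_prop) (by fun_prop) (by fun_prop) (by fun_prop)
  have Um : Measurable (Function.uncurry U) := by
    refine Measurable.indicator ?_ hS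
    fun_prop
  calc _ = ∫⁻ x, ∫⁻ w, U x w := by
        refine lintegral_congr fun x => ?_
        rw [← lintegral_const_mul]
        · refine lintegral_congr fun w => ?_
          simp only [hU, indicator, mem_ofPred_eq]
          split_ifs <;> simp
        · refine Measurable.indicator (by fun_prop) ?_
          exact measSet_and (by fun_prop) (by fun_prop) (by fun_prop) (by fun_prop)
    _ = ∫⁻ w, ∫⁻ x, U x w := lintegral_lintegral_swap Um.aemeasurable
    _ = _ := by
        refine lintegral_congr fun w => ?_
        by_cases h : 0 < w.1 ∧ 0 < w.2
        · obtain ⟨h1, h2⟩ := h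
          have hG : 0 ≤ GG K f w := by
            have := hf w.1; have := hf w.2; have := K0 _ _ h1 h2
            unfold GG; positivity
          have : ∀ x, U x w = (Ioo w.1 (w.1 + w.2)).indicator
              (fun x => ENNReal.ofReal (hF p x)) x * ENNReal.ofReal (GG K f w) := by
            intro x
            simp only [hU, indicator, mem_ofPred_eq, mem_Ioo]
            split_ifs <;> simp
          simp_rw [this]
          rw [lintegral_mul_const _ (Measurable.indicator (by fun_prop) measurableSet_Ioo),
            lintegral_indicator measurableSet_Ioo, lint_hF hp h1 h2, mul_comm,
            ← ENNReal.ofReal_mul hG]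
        · have hG : GG K f w = 0 := by
            unfold GG
            by_cases h1 : 0 < w.1
            · rw [f0 w.2 (by by_contra h2; exact h ⟨h1, not_le.1 h2⟩)]; simp
            · rw [f0 w.1 (not_lt.1 h1)]; simp
          have : ∀ x, U x w = 0 := by
            intro x; simp [hU, indicator, hG]
          simp [this, hG]

/-- symmetrisation -/
lemma symm_lint {K : ℝ → ℝ → ℝ} {f : ℝ → ℝ} (fm : Measurable f) (f0 : ∀ x, x ≤ 0 → f x = 0)
    (hf : ∀ x, 0 ≤ f x) (Km : Measurable (fun w : ℝ × ℝ => K w.1 w.2))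
    (K0 : ∀ x y, 0 < x → 0 < y → 0 ≤ K x y) (Ks : ∀ x y, 0 < x → 0 < y → K x y = K y x)
    {p : ℝ} (hp : 0 < p) :
    2 * ∫⁻ w : ℝ × ℝ, ENNReal.ofReal (GG K f w * (gF p w.1 - gF p (w.1 + w.2)))
    = ∫⁻ w : ℝ × ℝ, ENNReal.ofReal (K w.1 w.2 * (f w.1 * aF p w.1) * (f w.2 * aF p w.2)) := by
  have Gm : Measurable (GG K f) := by unfold GG; fun_prop
  have gm := measurable_gF p
  have e : ∫⁻ w : ℝ × ℝ, ENNReal.ofReal (GG K f w * (gF p w.1 - gF p (w.1 + w.2)))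
     = ∫⁻ w : ℝ × ℝ, ENNReal.ofReal (GG K f w.swap * (gF p w.2 - gF p (w.2 + w.1))) := by
    rw [Measure.volume_eq_prod, ← lintegral_prod_swap]
    rfl
  rw [two_mul]
  nth_rewrite 2 [e]
  rw [← lintegral_add_left (by fun_prop)]
  refine lintegral_congr fun w => ?_
  by_cases h : 0 < w.1 ∧ 0 < w.2
  · obtain ⟨h1, h2⟩ := h
    have q1 := hf w.1
    have q2 := hf w.2
    have q3 := K0 _ _ h1 h2
    have q4 := K0 _ _ h2 h1
    have q5 := gF_anti hp h1 h2
    have q6 := gF_anti hp h2 h1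
    rw [← ENNReal.ofReal_add]
    · congr 1
      have := gF_sym (p := p) h1 h2
      unfold GG
      simp only [Prod.fst_swap, Prod.snd_swap]
      rw [← Ks _ _ h1 h2, add_comm w.2 w.1]
      linear_combination (K w.1 w.2 * f w.1 * f w.2) * this
    · unfold GG
      apply mul_nonneg (by positivity) (by linarith)
    · unfold GG
      simp only [Prod.fst_swap, Prod.snd_swap]
      apply mul_nonneg (by positivity) (by linarith)
  · have : f w.1 = 0 ∨ f w.2 = 0 := by
      by_cases h1 : 0 < w.1
      · right; exact f0 w.2 (by by_contra h2; exact h ⟨h1, not_le.1 h2⟩)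
      · left; exact f0 w.1 (not_lt.1 h1)
    unfold GG
    rcases this with h | h <;> simp [h]

noncomputable def KK (α ε : ℝ) (x y : ℝ) : ℝ := 2 + ε * ((x / y) ^ α + (y / x) ^ α)

noncomputable def QF (f : ℝ → ℝ) (p : ℝ) : ℝ := ∫ x, f x * aF p x
noncomputable def QF' (f : ℝ → ℝ) (p : ℝ) : ℝ := ∫ x, f x * (x * exp (-(p * x)))
noncomputable def AF (β : ℝ) (f : ℝ → ℝ) (p : ℝ) : ℝ := ∫ x, x ^ β * (f x * aF p x)

section
variable {α ε : ℝ} {K : ℝ → ℝ → ℝ} {f : ℝ → ℝ}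

lemma fa_nonneg (f0 : ∀ x, x ≤ 0 → f x = 0)
    (hf : ∀ x, 0 ≤ f x) {p : ℝ} (hp : 0 < p) (x : ℝ) : 0 ≤ f x * aF p x := by
  rcases le_or_gt x 0 with h | h
  · simp [f0 x h]
  · exact mul_nonneg (hf x) (aF_nonneg hp h.le)

lemma Core.int_fa (c : Core α ε K f) {p : ℝ} (hp : 0 < p) : Integrable (fun x => f x * aF p x) := by
  have fm := c.meas
  have am := measurable_aF p
  refine c.int0.mono' (by fun_prop) (Eventually.of_forall fun x => ?_)
  rw [norm_of_nonneg (fa_nonneg c.zero c.nonneg hp x)]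
  have := c.nonneg x
  have := aF_le_one p x
  nlinarith

lemma Core.int_fe (c : Core α ε K f) {p : ℝ} (hp : 0 < p) :
    Integrable (fun x => f x * (x * exp (-(p * x)))) := by
  have fm := c.meas
  refine c.int1.mono' (by fun_prop) (Eventually.of_forall fun x => ?_)
  rcases le_or_gt x 0 with h | h
  · simp [c.zero x h]
  have h1 := c.nonneg x
  rw [norm_of_nonneg (by positivity)]
  have : exp (-(p * x)) ≤ 1 := by rw [exp_le_one_iff]; nlinarith [mul_pos hp h]
  have h2 : 0 ≤ f x * x := by positivity
  nlinarith

lemma Core.AF_pos (c : Core α ε K f) {p : ℝ} (hp : 0 < p) :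
    Integrable (fun x => x ^ α * (f x * aF p x)) ∧ 0 ≤ AF α f p ∧ AF α f p ≤ p ^ (1 - α) := by
  have fm := c.meas
  have am := measurable_aF p
  obtain ⟨ha0, ha1⟩ := c.ha
  have key : ∀ x, 0 ≤ x ^ α * (f x * aF p x) ∧ x ^ α * (f x * aF p x) ≤ p ^ (1 - α) * (x * f x) := by
    intro x
    rcases le_or_gt x 0 with h | h
    · simp [c.zero x h]
    have h1 := c.nonneg x
    have h2 := aF_nonneg hp h.le
    refine ⟨by positivity, ?_⟩
    have h3 : aF p x ≤ (p * x) ^ (1 - α) := by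
      rcases le_total (p * x) 1 with h4 | h4
      · refine (aF_le p x).trans ?_
        exact self_le_rpow_of_le_one (by positivity) h4 (by linarith)
      · exact (aF_le_one p x).trans (one_le_rpow h4 (by linarith))
    calc x ^ α * (f x * aF p x) ≤ x ^ α * (f x * (p * x) ^ (1 - α)) := by gcongr
      _ = p ^ (1 - α) * ((x ^ α * x ^ (1 - α)) * f x) := by
          rw [mul_rpow hp.le h.le]; ring
      _ = _ := by rw [← rpow_add h]; simp
  have hi : Integrable (fun x => x ^ α * (f x * aF p x)) := by
    refine (c.int1.const_mul (p ^ (1 - α))).mono' (by fun_prop) (Eventually.of_forall fun x => ?_)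
    rw [norm_of_nonneg (key x).1]; exact (key x).2
  refine ⟨hi, integral_nonneg fun x => (key x).1, ?_⟩
  calc AF α f p ≤ ∫ x, p ^ (1 - α) * (x * f x) :=
        integral_mono hi (c.int1.const_mul _) fun x => (key x).2
    _ = p ^ (1 - α) := by rw [integral_const_mul, c.mass, mul_one]

lemma Core.AF_neg (c : Core α ε K f) {p : ℝ} (hp : 0 < p) :
    Integrable (fun x => x ^ (-α) * (f x * aF p x)) ∧ 0 ≤ AF (-α) f p ∧
      AF (-α) f p ≤ p * ((∫ x, f x) + 1) := by
  have fm := c.meas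
  have am := measurable_aF p
  obtain ⟨ha0, ha1⟩ := c.ha
  have key : ∀ x, 0 ≤ x ^ (-α) * (f x * aF p x) ∧
      x ^ (-α) * (f x * aF p x) ≤ p * (f x + x * f x) := by
    intro x
    rcases le_or_gt x 0 with h | h
    · simp [c.zero x h]
    have h1 := c.nonneg x
    have h2 := aF_nonneg hp h.le
    refine ⟨by positivity, ?_⟩
    have h3 : x ^ (1 - α) ≤ 1 + x := by
      rcases le_total x 1 with h4 | h4
      · linarith [rpow_le_one h.le h4 (show 0 ≤ 1 - α by linarith)]
      · have := rpow_le_rpow_of_exponent_le h4 (show 1 - α ≤ 1 by linarith)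
        rw [rpow_one] at this; linarith
    calc x ^ (-α) * (f x * aF p x) ≤ x ^ (-α) * (f x * (p * x)) := by gcongr; exact aF_le p x
      _ = p * f x * (x ^ (-α) * x ^ (1:ℝ)) := by rw [rpow_one]; ring
      _ = p * f x * x ^ (1 - α) := by rw [← rpow_add h]; ring_nf
      _ ≤ p * f x * (1 + x) := by gcongr
      _ = _ := by ring
  have hd := (c.int0.add c.int1).const_mul p
  have hi : Integrable (fun x => x ^ (-α) * (f x * aF p x)) := by
    refine hd.mono' (by fun_prop) (Eventually.of_forall fun x => ?_)
    rw [norm_of_nonneg (key x).1]; exact (key x).2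
  refine ⟨hi, integral_nonneg fun x => (key x).1, ?_⟩
  calc AF (-α) f p ≤ ∫ x, p * (f x + x * f x) :=
        integral_mono hi hd fun x => (key x).2
    _ = _ := by rw [integral_const_mul, integral_add c.int0 c.int1, c.mass]

lemma Core.lint_KK (c : Core α ε K f) {p η : ℝ} (hη : 0 ≤ η) (hp : 0 < p) :
    ∫⁻ w : ℝ × ℝ, ENNReal.ofReal (GG (KK α η) f w * (gF p w.1 - gF p (w.1 + w.2)))
    = ENNReal.ofReal (QF f p ^ 2 + η * (AF α f p * AF (-α) f p)) := by
  have h := symm_lint (K := KK α η) c.meas c.zero c.nonneg (by unfold KK; fun_prop)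
    (fun x y hx hy => by unfold KK; positivity) (fun x y hx hy => by unfold KK; ring) hp
  obtain ⟨i1, n1, b1⟩ := c.AF_pos hp
  obtain ⟨i2, n2, b2⟩ := c.AF_neg hp
  have i0 := c.int_fa hp
  set F : ℝ → ℝ := fun x => f x * aF p x with hF
  have hFnn : ∀ x, 0 ≤ F x := fa_nonneg c.zero c.nonneg hp
  have e : ∀ w : ℝ × ℝ, KK α η w.1 w.2 * (f w.1 * aF p w.1) * (f w.2 * aF p w.2) =
      2 * (F w.1 * F w.2) + η * ((w.1 ^ α * F w.1) * (w.2 ^ (-α) * F w.2)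
        + (w.1 ^ (-α) * F w.1) * (w.2 ^ α * F w.2)) := by
    intro w
    by_cases h : 0 < w.1 ∧ 0 < w.2
    · obtain ⟨h1, h2⟩ := h
      simp only [KK, hF]
      rw [div_rpow h1.le h2.le, div_rpow h2.le h1.le, rpow_neg h1.le, rpow_neg h2.le]
      ring
    · have : f w.1 = 0 ∨ f w.2 = 0 := by
        by_cases h1 : 0 < w.1
        · right; exact c.zero w.2 (by by_contra h2; exact h ⟨h1, not_le.1 h2⟩)
        · left; exact c.zero w.1 (not_lt.1 h1)
      rcases this with h | h <;> simp [h, hF]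
  simp_rw [e] at h
  have j0 : Integrable (fun w : ℝ × ℝ => 2 * (F w.1 * F w.2)) (volume.prod volume) :=
    (i0.mul_prod i0).const_mul 2
  have j1 : Integrable (fun w : ℝ × ℝ => (w.1 ^ α * F w.1) * (w.2 ^ (-α) * F w.2))
    (volume.prod volume) := i1.mul_prod i2
  have j2 : Integrable (fun w : ℝ × ℝ => (w.1 ^ (-α) * F w.1) * (w.2 ^ α * F w.2))
    (volume.prod volume) := i2.mul_prod i1
  have j3 : Integrable (fun w : ℝ × ℝ => η * ((w.1 ^ α * F w.1) * (w.2 ^ (-α) * F w.2)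
        + (w.1 ^ (-α) * F w.1) * (w.2 ^ α * F w.2)))
    (volume.prod volume) := (j1.add j2).const_mul η
  have j4 : Integrable (fun w : ℝ × ℝ => 2 * (F w.1 * F w.2) +
      η * ((w.1 ^ α * F w.1) * (w.2 ^ (-α) * F w.2)
        + (w.1 ^ (-α) * F w.1) * (w.2 ^ α * F w.2)))
    (volume.prod volume) := j0.add j3
  rw [Measure.volume_eq_prod] at h ⊢
  rw [← ofReal_integral_eq_lintegral_ofReal j4] at h
  rotate_left
  · refine Eventually.of_forall fun w => ?_
    dsimp only [Pi.zero_apply]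
    rw [← e]
    by_cases h : 0 < w.1 ∧ 0 < w.2
    · obtain ⟨h1, h2⟩ := h
      have := hFnn w.1; have := hFnn w.2
      simp only [hF] at *
      have : 0 ≤ KK α η w.1 w.2 := by unfold KK; positivity
      exact mul_nonneg (mul_nonneg this (by assumption)) (by assumption)
    · have : f w.1 = 0 ∨ f w.2 = 0 := by
        by_cases h1 : 0 < w.1
        · right; exact c.zero w.2 (by by_contra h2; exact h ⟨h1, not_le.1 h2⟩)
        · left; exact c.zero w.1 (not_lt.1 h1)
      rcases this with h | h <;> simp [h]
  have v : (∫ w : ℝ × ℝ, 2 * (F w.1 * F w.2) + η * ((w.1 ^ α * F w.1) * (w.2 ^ (-α) * F w.2)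
        + (w.1 ^ (-α) * F w.1) * (w.2 ^ α * F w.2)) ∂(volume.prod volume))
      = 2 * (QF f p ^ 2 + η * (AF α f p * AF (-α) f p)) := by
    rw [integral_add j0 j3, integral_const_mul, integral_const_mul]
    rw [integral_add j1 j2, integral_prod_mul, integral_prod_mul (f := fun x => x ^ α * F x) (g := fun x => x ^ (-α) * F x),
      integral_prod_mul (f := fun x => x ^ (-α) * F x) (g := fun x => x ^ α * F x)]
    simp only [QF, AF, hF]
    ring
  rw [v, ENNReal.ofReal_mul (by norm_num)] at h
  have two : ENNReal.ofReal 2 = 2 := by simp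
  rw [two] at h
  exact (ENNReal.mul_right_inj (by norm_num) (by norm_num)).1 h

lemma GG_zero (f0 : ∀ x, x ≤ 0 → f x = 0) {w : ℝ × ℝ} (h : ¬ (0 < w.1 ∧ 0 < w.2)) : GG K f w = 0 := by
  have : f w.1 = 0 ∨ f w.2 = 0 := by
    by_cases h1 : 0 < w.1
    · right; exact f0 w.2 (by by_contra h2; exact h ⟨h1, not_le.1 h2⟩)
    · left; exact f0 w.1 (not_lt.1 h1)
  unfold GG
  rcases this with h | h <;> simp [h]

lemma Core.GG_nonneg (c : Core α ε K f) (w : ℝ × ℝ) : 0 ≤ GG K f w := by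
  by_cases h : 0 < w.1 ∧ 0 < w.2
  · have := c.Klow _ _ h.1 h.2
    have := c.nonneg w.1
    have := c.nonneg w.2
    obtain ⟨h1, h2⟩ := h
    have : 0 ≤ K w.1 w.2 := by linarith
    unfold GG; positivity
  · rw [GG_zero c.zero h]

lemma GG_mono {K K' : ℝ → ℝ → ℝ} (f0 : ∀ x, x ≤ 0 → f x = 0) (hf : ∀ x, 0 ≤ f x) {p : ℝ} (hp : 0 < p)
    (hK : ∀ x y, 0 < x → 0 < y → K x y ≤ K' x y) :
    ∫⁻ w : ℝ × ℝ, ENNReal.ofReal (GG K f w * (gF p w.1 - gF p (w.1 + w.2))) ≤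
    ∫⁻ w : ℝ × ℝ, ENNReal.ofReal (GG K' f w * (gF p w.1 - gF p (w.1 + w.2))) := by
  refine lintegral_mono fun w => ENNReal.ofReal_le_ofReal ?_
  by_cases h : 0 < w.1 ∧ 0 < w.2
  · have h3 := gF_anti hp h.1 h.2
    have := hf w.1
    have := hf w.2
    obtain ⟨h1, h2⟩ := h
    have := hK _ _ h1 h2
    have : 0 ≤ gF p w.1 - gF p (w.1 + w.2) := by linarith
    unfold GG
    gcongr
  · rw [GG_zero f0 h, GG_zero f0 h]

noncomputable def SS (x : ℝ) : Set (ℝ × ℝ) := {w : ℝ × ℝ | w.1 < x ∧ x < w.1 + w.2}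

lemma measSS (x : ℝ) : MeasurableSet (SS x) :=
  measSet_and (by fun_prop) (by fun_prop) (by fun_prop) (by fun_prop)

lemma Core.upper (c : Core α ε K f) {p : ℝ} (hp : 0 < p) :
    ∫⁻ w : ℝ × ℝ, ENNReal.ofReal (GG K f w * (gF p w.1 - gF p (w.1 + w.2))) ≤
      ENNReal.ofReal (QF f p ^ 2 + ε * (AF α f p * AF (-α) f p)) := by
  rw [← c.lint_KK c.he.le hp]
  exact GG_mono c.zero c.nonneg hp c.Kupp

lemma Core.lower (c : Core α ε K f) {p : ℝ} (hp : 0 < p) :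
    ENNReal.ofReal (QF f p ^ 2) ≤
    ∫⁻ w : ℝ × ℝ, ENNReal.ofReal (GG K f w * (gF p w.1 - gF p (w.1 + w.2))) := by
  have := c.lint_KK le_rfl hp
  rw [zero_mul, add_zero] at this
  rw [← this]
  refine GG_mono c.zero c.nonneg hp fun x y hx hy => ?_
  have := c.Klow x y hx hy
  unfold KK; linarith

lemma Core.Gmeas (c : Core α ε K f) : Measurable (GG K f) := by
  have := c.meas
  have := c.Kmeas
  unfold GG; fun_prop

lemma Core.measJ (c : Core α ε K f) : Measurable (fun x : ℝ =>
    ∫⁻ w, (SS x).indicator (fun w => ENNReal.ofReal (GG K f w)) w) := by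
  have hG := c.Gmeas
  have : Measurable (Function.uncurry (fun (x : ℝ) (w : ℝ × ℝ) =>
      {q : ℝ × (ℝ × ℝ) | q.2.1 < q.1 ∧ q.1 < q.2.1 + q.2.2}.indicator
        (fun q => ENNReal.ofReal (GG K f q.2)) (x, w))) := by
    refine Measurable.indicator (by fun_prop) ?_
    exact measSet_and (by fun_prop) (by fun_prop) (by fun_prop) (by fun_prop)
  exact this.lintegral_prod_right

lemma Core.J_fin (c : Core α ε K f) : ∀ᵐ x : ℝ, 0 < x →
    ∫⁻ w, (SS x).indicator (fun w => ENNReal.ofReal (GG K f w)) w < ⊤ := by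
  have h := tonelli c.meas c.zero c.nonneg c.Kmeas
    (fun x y hx hy => by linarith [c.Klow x y hx hy]) one_pos
  have hfin := (h.trans_le (c.upper one_pos)).trans_lt ENNReal.ofReal_lt_top
  have hm := c.measJ
  have hh := measurable_hF 1
  have := ae_lt_top (by exact (by fun_prop : Measurable (fun x => ENNReal.ofReal (hF 1 x))).mul hm) hfin.ne
  filter_upwards [this] with x hx hx0
  by_contra hc
  have : ∫⁻ w, (SS x).indicator (fun w => ENNReal.ofReal (GG K f w)) w = ⊤ := by
    simpa using hc
  have h2 := hF_pos one_pos hx0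
  change _ * (∫⁻ w, (SS x).indicator (fun w => ENNReal.ofReal (GG K f w)) w) < ⊤ at hx
  rw [this, ENNReal.mul_top (by simpa using h2)] at hx
  exact lt_irrefl _ hx

lemma Core.J_eq (c : Core α ε K f) : ∀ᵐ x : ℝ, 0 < x →
    Integrable ((SS x).indicator (GG K f)) (volume.prod volume) ∧
    x ^ 2 * f x = ∫ y, ∫ z, (SS x).indicator (GG K f) (y, z) := by
  filter_upwards [c.J_fin, c.eqn] with x h1 h2 hx
  have h1 := h1 hx
  have h2 := h2 hx
  refine ⟨⟨(c.Gmeas.indicator (measSS x)).aestronglyMeasurable, ?_⟩, ?_⟩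
  · rw [hasFiniteIntegral_iff_ofReal]
    · refine lt_of_le_of_lt (le_of_eq ?_) h1
      refine lintegral_congr fun w => ?_
      simp only [indicator]
      split_ifs <;> simp
    · exact Eventually.of_forall fun w => indicator_nonneg (fun w _ => c.GG_nonneg w) w
  · rw [h2, ← integral_indicator measurableSet_Ioo]
    refine integral_congr_ae (Eventually.of_forall fun y => ?_)
    simp only
    by_cases hy : y ∈ Ioo 0 x
    · rw [indicator_of_mem hy, ← integral_indicator measurableSet_Ioi]
      refine integral_congr_ae (Eventually.of_forall fun z => ?_)
      have : (z ∈ Ioi (x - y)) ↔ (y, z) ∈ SS x := by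
        simp [SS, hy.2, sub_lt_iff_lt_add']
      beta_reduce
      by_cases hz : z ∈ Ioi (x - y)
      · rw [indicator_of_mem hz, indicator_of_mem (this.1 hz)]; rfl
      · rw [indicator_of_notMem hz, indicator_of_notMem (fun q => hz (this.2 q))]
    · rw [indicator_of_notMem hy]
      symm
      apply integral_eq_zero_of_ae
      refine Eventually.of_forall fun z => ?_
      simp only [Pi.zero_apply]
      by_cases hw : (y, z) ∈ SS x
      · rw [indicator_of_mem hw]
        apply GG_zero c.zero
        rintro ⟨q, -⟩
        exact hy ⟨q, hw.1⟩
      · rw [indicator_of_notMem hw]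

lemma Core.main (c : Core α ε K f) {p : ℝ} (hp : 0 < p) :
    QF f p ^ 2 ≤ QF f p - p * QF' f p ∧
    QF f p - p * QF' f p ≤ QF f p ^ 2 + ε * (AF α f p * AF (-α) f p) := by
  have h := tonelli c.meas c.zero c.nonneg c.Kmeas
    (fun x y hx hy => by linarith [c.Klow x y hx hy]) hp
  have i1 := c.int_fa hp
  have i2 := (c.int_fe hp).const_mul p
  have nn : ∀ x, 0 ≤ f x * aF p x - p * (f x * (x * exp (-(p * x)))) := by
    intro x
    rcases le_or_gt x 0 with h | h
    · simp [c.zero x h]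
    have e : f x * aF p x - p * (f x * (x * exp (-(p * x)))) = f x * (hF p x * x ^ 2) := by
      unfold hF aF; field_simp
    rw [e]
    have := c.nonneg x
    have := hF_pos hp h
    positivity
  have e : ∫⁻ x, ENNReal.ofReal (hF p x) *
      ∫⁻ w : ℝ × ℝ, {w : ℝ × ℝ | w.1 < x ∧ x < w.1 + w.2}.indicator
        (fun w => ENNReal.ofReal (GG K f w)) w = ENNReal.ofReal (QF f p - p * QF' f p) := by
    unfold QF QF'
    have i3 : Integrable (fun x => f x * aF p x - p * (f x * (x * exp (-(p * x))))) := i1.sub i2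
    rw [← integral_const_mul, ← integral_sub i1 i2, ofReal_integral_eq_lintegral_ofReal i3
      (Eventually.of_forall nn)]
    refine lintegral_congr_ae ?_
    filter_upwards [c.J_eq] with x hx
    rcases le_or_gt x 0 with h | h
    · have : ∀ w : ℝ × ℝ, {w : ℝ × ℝ | w.1 < x ∧ x < w.1 + w.2}.indicator
        (fun w => ENNReal.ofReal (GG K f w)) w = 0 := by
        intro w
        by_cases hw : w ∈ {w : ℝ × ℝ | w.1 < x ∧ x < w.1 + w.2}
        · rw [indicator_of_mem hw, GG_zero c.zero]
          · simp
          · rintro ⟨q, -⟩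
            have : w.1 < x := hw.1
            linarith
        · rw [indicator_of_notMem hw]
      simp [this, c.zero x h]
    · obtain ⟨g1, g2⟩ := hx h
      have : ∫⁻ w : ℝ × ℝ, {w : ℝ × ℝ | w.1 < x ∧ x < w.1 + w.2}.indicator
        (fun w => ENNReal.ofReal (GG K f w)) w = ENNReal.ofReal (x ^ 2 * f x) := by
        rw [g2, ← integral_prod _ g1, ofReal_integral_eq_lintegral_ofReal g1]
        · refine lintegral_congr fun w => ?_
          change (SS x).indicator (fun w => ENNReal.ofReal (GG K f w)) w = _
          by_cases hw : w ∈ SS x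
          · rw [indicator_of_mem hw, indicator_of_mem hw]
          · rw [indicator_of_notMem hw, indicator_of_notMem hw]; simp
        · exact Eventually.of_forall fun w => indicator_nonneg (fun w _ => c.GG_nonneg w) w
      rw [this, ← ENNReal.ofReal_mul (hF_pos hp h).le]
      congr 1
      unfold hF aF; field_simp
  rw [e] at h
  have hu := h.trans_le (c.upper hp)
  have hl := (c.lower hp).trans_eq h.symm
  have n0 : 0 ≤ QF f p - p * QF' f p := by
    unfold QF QF'
    rw [← integral_const_mul, ← integral_sub i1 i2]
    exact integral_nonneg nn
  have n1 := (c.AF_pos hp).2.1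
  have n2 := (c.AF_neg hp).2.1
  have n3 := c.he
  exact ⟨(ENNReal.ofReal_le_ofReal_iff n0).1 hl, (ENNReal.ofReal_le_ofReal_iff (by positivity)).1 hu⟩
end

section
open Topology
variable {α ε : ℝ} {K : ℝ → ℝ → ℝ} {f : ℝ → ℝ}

lemma Core.QF_deriv (c : Core α ε K f) {p : ℝ} (hp : 0 < p) : HasDerivAt (QF f) (QF' f p) p := by
  have fm := c.meas
  unfold QF QF'
  refine (hasDerivAt_integral_of_dominated_loc_of_deriv_le (μ := volume)
    (F := fun q x => f x * aF q x) (F' := fun q x => f x * (x * exp (-(q * x))))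
    (bound := fun x => x * f x) (Ioi_mem_nhds hp) ?_ (c.int_fa hp) ?_ ?_ c.int1 ?_).2
  · refine Eventually.of_forall fun q => ?_
    have := measurable_aF q
    fun_prop
  · fun_prop
  · refine Eventually.of_forall fun x q hq => ?_
    rcases le_or_gt x 0 with h | h
    · simp [c.zero x h]
    have h1 := c.nonneg x
    have hq : 0 < q := hq
    rw [norm_of_nonneg (by positivity)]
    have : exp (-(q * x)) ≤ 1 := by rw [exp_le_one_iff]; nlinarith [mul_pos hq h]
    have h2 : 0 ≤ f x * x := by positivity
    nlinarith
  · refine Eventually.of_forall fun x q hq => ?_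
    unfold aF
    have h1 : HasDerivAt (fun q => exp (-(q * x))) (exp (-(q * x)) * (-(1 * x))) q :=
      (((hasDerivAt_id q).mul_const x).neg).exp
    have h2 := (h1.const_sub 1).const_mul (f x)
    refine h2.congr_deriv ?_
    ring

lemma Core.QF_pos (c : Core α ε K f) {p : ℝ} (hp : 0 < p) : 0 < QF f p := by
  have h0 : 0 ≤ QF f p := integral_nonneg (fa_nonneg c.zero c.nonneg hp)
  refine lt_of_le_of_ne h0 fun h => ?_
  have h1 := (integral_eq_zero_iff_of_nonneg (fa_nonneg c.zero c.nonneg hp) (c.int_fa hp)).1 h.symm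
  have h2 : (fun x => x * f x) =ᵐ[volume] 0 := by
    filter_upwards [h1] with x hx
    rcases le_or_gt x 0 with h | h
    · simp [c.zero x h]
    · simp only [Pi.zero_apply, mul_eq_zero] at hx ⊢
      exact Or.inr (hx.resolve_right (aF_pos hp h).ne')
  have := c.mass
  rw [integral_eq_zero_of_ae h2] at this
  norm_num at this

lemma Core.QF_lim0 (c : Core α ε K f) : Tendsto (fun p => QF f p / p) (𝓝[>] 0) (𝓝 1) := by
  have fm := c.meas
  rw [← c.mass]
  have : (fun p => QF f p / p) = fun p => ∫ x, f x * aF p x / p := by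
    ext p; unfold QF; rw [integral_div]
  rw [this]
  refine tendsto_integral_filter_of_dominated_convergence (fun x => x * f x) ?_ ?_ c.int1 ?_
  · refine Eventually.of_forall fun q => ?_
    have := measurable_aF q
    fun_prop
  · filter_upwards [self_mem_nhdsWithin] with p hp
    have hp : 0 < p := hp
    refine Eventually.of_forall fun x => ?_
    rw [norm_of_nonneg (div_nonneg (fa_nonneg c.zero c.nonneg hp x) hp.le), div_le_iff₀ hp]
    have := c.nonneg x
    have := aF_le p x
    nlinarith
  · refine Eventually.of_forall fun x => ?_
    have h1 : HasDerivAt (fun q => aF q x) x 0 := by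
      unfold aF
      have h1 : HasDerivAt (fun q => exp (-(q * x))) (exp (-(0 * x)) * (-(1 * x))) 0 :=
        (((hasDerivAt_id (0:ℝ)).mul_const x).neg).exp
      refine (h1.const_sub 1).congr_deriv ?_
      simp
    have h2 := (hasDerivAt_iff_tendsto_slope_zero.1 h1).mono_left
      (nhdsWithin_mono 0 (show Ioi (0:ℝ) ⊆ {0}ᶜ from fun y hy => (ne_of_gt hy)))
    have h3 := h2.const_mul (f x)
    rw [mul_comm (f x) x] at h3
    refine h3.congr fun p => ?_
    have : aF 0 x = 0 := by simp [aF]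
    simp only [zero_add, this, sub_zero, smul_eq_mul]
    ring

lemma ge_of_mono {u u' : ℝ → ℝ} {l : ℝ} (hd : ∀ p, 0 < p → HasDerivAt u (u' p) p)
    (hn : ∀ p, 0 < p → 0 ≤ u' p) (hl : Tendsto u (𝓝[>] 0) (𝓝 l)) {p : ℝ} (hp : 0 < p) : l ≤ u p := by
  have hm : MonotoneOn u (Ioi 0) := by
    apply monotoneOn_of_deriv_nonneg (convex_Ioi 0)
    · exact fun x hx => (hd x hx).continuousAt.continuousWithinAt
    · rw [interior_Ioi]
      exact fun x hx => (hd x hx).differentiableAt.differentiableWithinAt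
    · rw [interior_Ioi]
      intro x hx
      rw [(hd x hx).deriv]
      exact hn x hx
  refine le_of_tendsto hl ?_
  filter_upwards [Ioc_mem_nhdsGT hp] with q hq
  exact hm hq.1 hp hq.2

lemma Core.QF_le (c : Core α ε K f) {p : ℝ} (hp : 0 < p) : QF f p ≤ p / (1 + p) := by
  have h : 1 ≤ p / QF f p - p := by
    refine ge_of_mono (u := fun p => p / QF f p - p)
      (u' := fun p => (1 * QF f p - p * QF' f p) / QF f p ^ 2 - 1) ?_ ?_ ?_ hp
    · intro q hq
      exact ((hasDerivAt_id q).div (c.QF_deriv hq) (c.QF_pos hq).ne').sub (hasDerivAt_id q)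
    · intro q hq
      have h1 := (c.main hq).1
      have h2 := c.QF_pos hq
      have : 1 ≤ (1 * QF f q - q * QF' f q) / QF f q ^ 2 := by
        rw [le_div_iff₀ (by positivity)]; linarith
      linarith
    · have h1 := (c.QF_lim0.inv₀ one_ne_zero).sub (tendsto_nhdsWithin_of_tendsto_nhds (s := Ioi 0) (tendsto_id (x := 𝓝 (0:ℝ))))
      simpa using h1
  have h2 := c.QF_pos hp
  rw [le_div_iff₀ (by positivity)]
  have h3 : 1 + p ≤ p / QF f p := by linarith
  rw [le_div_iff₀ h2] at h3
  linarith

lemma Core.QF_lim (c : Core α ε K f) :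
    Tendsto (fun n : ℕ => QF f ((n : ℝ) + 1)) atTop (𝓝 (∫ x, f x)) := by
  have fm := c.meas
  unfold QF
  refine tendsto_integral_of_dominated_convergence f ?_ c.int0 ?_ ?_
  · intro n
    have := measurable_aF ((n:ℝ) + 1)
    fun_prop
  · intro n
    refine Eventually.of_forall fun x => ?_
    have hp : (0:ℝ) < n + 1 := by positivity
    rw [norm_of_nonneg (fa_nonneg c.zero c.nonneg hp x)]
    have := c.nonneg x
    have := aF_le_one ((n:ℝ) + 1) x
    nlinarith
  · refine Eventually.of_forall fun x => ?_
    rcases le_or_gt x 0 with h | h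
    · simp [c.zero x h]
    · have h1 : Tendsto (fun n : ℕ => ((n:ℝ) + 1) * x) atTop atTop :=
        (tendsto_atTop_add_const_right _ _ tendsto_natCast_atTop_atTop).atTop_mul_const h
      have h2 := ((tendsto_exp_neg_atTop_nhds_zero.comp h1).const_sub 1).const_mul (f x)
      simpa [aF, Function.comp_def] using h2

lemma Core.m0_le (c : Core α ε K f) : ∫ x, f x ≤ 1 := by
  refine le_of_tendsto c.QF_lim (Eventually.of_forall fun n => ?_)
  have hp : (0:ℝ) < n + 1 := by positivity
  refine (c.QF_le hp).trans ?_
  rw [div_le_one (by positivity)]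
  linarith

lemma Core.QF_le_m0 (c : Core α ε K f) {p : ℝ} (hp : 0 < p) : QF f p ≤ ∫ x, f x := by
  refine integral_mono (c.int_fa hp) c.int0 fun x => ?_
  have := c.nonneg x
  have := aF_le_one p x
  simp only
  nlinarith

lemma Core.QF_ge (c : Core α ε K f) {p : ℝ} (hp : 0 < p) :
    p / (1 + p) - ε * (2 / (1 - α) * p ^ (1 - α) * p) ≤ QF f p := by
  obtain ⟨ha0, ha1⟩ := c.ha
  have hb : 0 < 1 - α := by linarith
  have h : 0 ≤ QF f p / p - (1 + p)⁻¹ + ε * (2 / (1 - α) * p ^ (1 - α)) := by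
    refine ge_of_mono (u := fun p => QF f p / p - (1 + p)⁻¹ + ε * (2 / (1 - α) * p ^ (1 - α)))
      (u' := fun p => (QF' f p * p - QF f p * 1) / p ^ 2 - (- 1 / (1 + p) ^ 2)
        + ε * (2 / (1 - α) * ((1 - α) * p ^ (1 - α - 1)))) ?_ ?_ ?_ hp
    · intro q hq
      refine (((c.QF_deriv hq).div (hasDerivAt_id q) hq.ne').sub ?_).add ?_
      · exact ((hasDerivAt_id q).const_add 1).inv (by simp only [id]; positivity)
      · exact ((hasDerivAt_rpow_const (Or.inl hq.ne')).const_mul _).const_mul _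
    · intro q hq
      have h1 := (c.main hq).2
      have h2 := c.QF_pos hq
      obtain ⟨-, n1, b1⟩ := c.AF_pos hq
      obtain ⟨-, n2, b2⟩ := c.AF_neg hq
      have b3 : AF (-α) f q ≤ q * 2 := b2.trans (by have := c.m0_le; gcongr; linarith)
      have b4 : AF α f q * AF (-α) f q ≤ q ^ (1 - α) * (q * 2) := by gcongr
      have he := c.he
      have b5 : ε * (AF α f q * AF (-α) f q) ≤ ε * (q ^ (1 - α) * (q * 2)) := by gcongr
      have h3 := c.QF_le hq
      have e1 : q ^ (1 - α - 1) * q = q ^ (1 - α) := by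
        rw [rpow_sub_one hq.ne']; field_simp
      have e2 : ε * (2 / (1 - α) * ((1 - α) * q ^ (1 - α - 1))) = ε * (q ^ (1 - α) * (q * 2)) / q ^ 2 := by
        rw [← e1]; field_simp
      have e3 : (QF f q / q) ^ 2 ≤ 1 / (1 + q) ^ 2 := by
        rw [show 1 / (1 + q) ^ 2 = (1 / (1 + q)) ^ 2 by rw [div_pow, one_pow]]
        have : QF f q / q ≤ 1 / (1 + q) := by
          rw [div_le_iff₀ hq]; calc _ ≤ _ := h3
            _ = _ := by ring
        gcongr
      have e4 : (QF' f q * q - QF f q * 1) / q ^ 2 + ε * (q ^ (1 - α) * (q * 2)) / q ^ 2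
          ≥ - (QF f q / q) ^ 2 := by
        rw [div_pow, ← add_div, ge_iff_le, ← neg_div]
        gcongr
        linarith
      rw [e2, neg_div]
      linarith
    · have h1 : Tendsto (fun p : ℝ => (1 + p)⁻¹) (𝓝[>] 0) (𝓝 1) := by
        have : ContinuousAt (fun p : ℝ => (1 + p)⁻¹) 0 := by
          apply ContinuousAt.inv₀ <;> [fun_prop; norm_num]
        have := this.tendsto.mono_left (nhdsWithin_le_nhds (s := Ioi 0))
        simpa using this
      have h2 : Tendsto (fun p : ℝ => p ^ (1 - α)) (𝓝[>] 0) (𝓝 0) := by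
        have := (continuousAt_rpow_const 0 (1 - α) (Or.inr hb.le)).tendsto.mono_left (nhdsWithin_le_nhds (s := Ioi 0))
        rwa [zero_rpow hb.ne'] at this
      have := (c.QF_lim0.sub h1).add ((h2.const_mul (2 / (1 - α))).const_mul ε)
      simpa using this
  have : 0 ≤ (QF f p / p - (1 + p)⁻¹ + ε * (2 / (1 - α) * p ^ (1 - α))) * p := by positivity
  have e : (QF f p / p - (1 + p)⁻¹ + ε * (2 / (1 - α) * p ^ (1 - α))) * p
    = QF f p - p / (1 + p) + ε * (2 / (1 - α) * p ^ (1 - α) * p) := by field_simp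
  linarith
end

section
open Topology

structure PosF (f : ℝ → ℝ) : Prop where
  meas : Measurable f
  nonneg : ∀ x, 0 ≤ f x
  zero : ∀ x, x ≤ 0 → f x = 0
  int0 : Integrable f
  le1 : ∫ x, f x ≤ 1

lemma Core.posF {α ε : ℝ} {K : ℝ → ℝ → ℝ} {f : ℝ → ℝ} (c : Core α ε K f) : PosF f :=
  ⟨c.meas, c.nonneg, c.zero, c.int0, c.m0_le⟩

noncomputable def e0 : ℝ → ℝ := (Ioi (0:ℝ)).indicator (fun x => exp (-x))

lemma e0_posF : PosF e0 := by
  refine ⟨?_, ?_, ?_, ?_, ?_⟩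
  · exact Measurable.indicator (by fun_prop) measurableSet_Ioi
  · intro x; exact indicator_nonneg (fun x _ => (exp_pos _).le) x
  · intro x hx; exact indicator_of_notMem (by simpa using hx) _
  · exact (integrable_indicator_iff measurableSet_Ioi).2 (integrableOn_exp_neg_Ioi 0)
  · unfold e0; rw [integral_indicator measurableSet_Ioi, integral_exp_neg_Ioi_zero]

lemma PosF.int_comp {f : ℝ → ℝ} (h : PosF f) {g : ℝ → ℝ} (hg : Continuous g) :
    Integrable (fun x => f x * g (exp (-x))) := by
  obtain ⟨M, hM⟩ := (isCompact_Icc (a := (0:ℝ)) (b := 1)).exists_bound_of_continuousOn hg.continuousOn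
  have fm := h.meas
  have gm := hg.measurable
  refine (h.int0.const_mul M).mono' (by fun_prop) (Eventually.of_forall fun x => ?_)
  rcases le_or_gt x 0 with hx | hx
  · simp [h.zero x hx]
  · rw [norm_mul, norm_of_nonneg (h.nonneg x), mul_comm]
    have := hM (exp (-x)) ⟨(exp_pos _).le, by rw [exp_le_one_iff]; linarith⟩
    have := h.nonneg x
    gcongr

lemma PosF.approx {f : ℝ → ℝ} (h : PosF f) {g q : ℝ → ℝ} (hg : Continuous g) (hq : Continuous q)
    {η : ℝ} (hη : 0 ≤ η) (hc : ∀ s ∈ Icc (0:ℝ) 1, |q s - g s| ≤ η) :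
    |(∫ x, f x * q (exp (-x))) - ∫ x, f x * g (exp (-x))| ≤ η := by
  rw [← integral_sub (h.int_comp hq) (h.int_comp hg), ← norm_eq_abs]
  calc _ ≤ ∫ x, η * f x := by
        refine norm_integral_le_of_norm_le (h.int0.const_mul η) (Eventually.of_forall fun x => ?_)
        rcases le_or_gt x 0 with hx | hx
        · simp [h.zero x hx]
        · rw [← mul_sub, norm_mul, norm_of_nonneg (h.nonneg x), mul_comm, norm_eq_abs]
          have := hc (exp (-x)) ⟨(exp_pos _).le, by rw [exp_le_one_iff]; linarith⟩
          have := h.nonneg x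
          gcongr
    _ = η * ∫ x, f x := integral_const_mul _ _
    _ ≤ η * 1 := by have := h.le1; gcongr
    _ = η := mul_one _

lemma e0_moment (k : ℕ) : ∫ x, e0 x * exp (-x) ^ k = 1 / (1 + (k:ℝ)) := by
  have : ∀ x, e0 x * exp (-x) ^ k = (Ioi (0:ℝ)).indicator (fun x => exp ((-(1 + (k:ℝ))) * x)) x := by
    intro x
    by_cases hx : x ∈ Ioi (0:ℝ)
    · rw [e0, indicator_of_mem hx, indicator_of_mem hx, ← exp_nat_mul, ← exp_add]
      congr 1; ring
    · rw [e0, indicator_of_notMem hx, indicator_of_notMem hx, zero_mul]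
  simp_rw [this]
  rw [integral_indicator measurableSet_Ioi, integral_exp_mul_Ioi]
  · have h1 : (1:ℝ) + k ≠ 0 := by positivity
    rw [mul_zero, exp_zero, neg_div_neg_eq]
  · have : (0:ℝ) ≤ k := by positivity
    linarith

variable {f : ℕ → ℝ → ℝ}

lemma weak_conv (hf : ∀ n, PosF (f n))
    (hm : ∀ k : ℕ, Tendsto (fun n => ∫ x, f n x * exp (-x) ^ k) atTop (𝓝 (1 / (1 + (k:ℝ)))))
    {g : ℝ → ℝ} (hg : Continuous g) :
    Tendsto (fun n => ∫ x, f n x * g (exp (-x))) atTop (𝓝 (∫ x, e0 x * g (exp (-x)))) := by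
  have hP : ∀ P : Polynomial ℝ, Tendsto (fun n => ∫ x, f n x * P.eval (exp (-x))) atTop
      (𝓝 (∫ x, e0 x * P.eval (exp (-x)))) := by
    intro P
    induction P using Polynomial.induction_on' with
    | add p q hp hq =>
      have := hp.add hq
      simp only [Polynomial.eval_add, mul_add]
      rw [integral_add (e0_posF.int_comp p.continuous) (e0_posF.int_comp q.continuous)]
      refine this.congr fun n => ?_
      rw [integral_add ((hf n).int_comp p.continuous) ((hf n).int_comp q.continuous)]
    | monomial k a =>
      have h1 : ∀ (u : ℝ → ℝ), ∫ x, u x * (Polynomial.monomial k a).eval (exp (-x))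
          = a * ∫ x, u x * exp (-x) ^ k := by
        intro u
        rw [← integral_const_mul]
        refine integral_congr_ae (Eventually.of_forall fun x => ?_)
        simp only [Polynomial.eval_monomial]
        ring
      simp_rw [h1]
      rw [e0_moment]
      exact (hm k).const_mul a
  rw [Metric.tendsto_atTop]
  intro η hη
  obtain ⟨P, hPg⟩ := exists_polynomial_near_of_continuousOn 0 1 g hg.continuousOn (η / 3) (by positivity)
  obtain ⟨N, hN⟩ := Metric.tendsto_atTop.1 (hP P) (η / 3) (by positivity)
  refine ⟨N, fun n hn => ?_⟩
  have a1 := hN n hn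
  have a2 := (hf n).approx hg P.continuous (by positivity) (fun s hs => (hPg s hs).le)
  have a3 := e0_posF.approx hg P.continuous (by positivity) (fun s hs => (hPg s hs).le)
  rw [dist_eq] at a1 ⊢
  rw [abs_le] at a2 a3
  rw [abs_lt] at a1 ⊢
  constructor <;> linarith [a1.1, a1.2, a2.1, a2.2, a3.1, a3.2]

noncomputable def ramp (a b s : ℝ) : ℝ := max 0 (min 1 ((b - s) / (b - a)))

lemma ramp_cont (a b : ℝ) : Continuous (ramp a b) := by unfold ramp; fun_prop

lemma PosF.ramp_bd {f : ℝ → ℝ} (h : PosF f) {t1 t2 : ℝ} (ht : t1 < t2) :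
    ∫ x in Ioi t2, f x ≤ ∫ x, f x * ramp (exp (-t2)) (exp (-t1)) (exp (-x)) ∧
    ∫ x, f x * ramp (exp (-t2)) (exp (-t1)) (exp (-x)) ≤ ∫ x in Ioi t1, f x := by
  have hi := h.int_comp (ramp_cont (exp (-t2)) (exp (-t1)))
  have hlt : exp (-t2) < exp (-t1) := by rw [exp_lt_exp]; linarith
  rw [← integral_indicator measurableSet_Ioi, ← integral_indicator measurableSet_Ioi]
  constructor
  · refine integral_mono (h.int0.indicator measurableSet_Ioi) hi fun x => ?_
    have h0 := h.nonneg x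
    by_cases hx : x ∈ Ioi t2
    · rw [indicator_of_mem hx]
      have hx : t2 < x := hx
      have h1 : exp (-x) < exp (-t2) := by rw [exp_lt_exp]; linarith
      have : 1 ≤ (exp (-t1) - exp (-x)) / (exp (-t1) - exp (-t2)) := by
        rw [le_div_iff₀ (by linarith)]; linarith
      have : ramp (exp (-t2)) (exp (-t1)) (exp (-x)) = 1 := by
        unfold ramp; rw [min_eq_left this]; norm_num
      simp only [this, mul_one, le_refl]
    · rw [indicator_of_notMem hx]
      exact mul_nonneg h0 (le_max_left _ _)
  · refine integral_mono hi (h.int0.indicator measurableSet_Ioi) fun x => ?_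
    have h0 := h.nonneg x
    by_cases hx : x ∈ Ioi t1
    · rw [indicator_of_mem hx]
      have : ramp (exp (-t2)) (exp (-t1)) (exp (-x)) ≤ 1 := by
        unfold ramp; simp
      simp only
      nlinarith
    · rw [indicator_of_notMem hx]
      have hx : x ≤ t1 := not_lt.1 hx
      have h1 : exp (-t1) ≤ exp (-x) := by rw [exp_le_exp]; linarith
      have : (exp (-t1) - exp (-x)) / (exp (-t1) - exp (-t2)) ≤ 0 := by
        apply div_nonpos_of_nonpos_of_nonneg <;> linarith
      have : ramp (exp (-t2)) (exp (-t1)) (exp (-x)) = 0 := by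
        unfold ramp; rw [max_eq_left]; exact (min_le_right _ _).trans this
      simp [this]

lemma e0_tail_le (t : ℝ) : ∫ x in Ioi t, e0 x ≤ exp (-t) := by
  rw [← integral_exp_neg_Ioi t]
  refine setIntegral_mono e0_posF.int0.integrableOn (integrableOn_exp_neg_Ioi t) fun x => ?_
  unfold e0
  exact indicator_le_self' (fun x _ => (exp_pos _).le) x

lemma e0_tail_eq {t : ℝ} (ht : 0 ≤ t) : ∫ x in Ioi t, e0 x = exp (-t) := by
  rw [← integral_exp_neg_Ioi t]
  refine setIntegral_congr_fun measurableSet_Ioi fun x hx => ?_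
  unfold e0
  exact indicator_of_mem (lt_of_le_of_lt ht hx) _

lemma tail_conv (hf : ∀ n, PosF (f n))
    (hm : ∀ k : ℕ, Tendsto (fun n => ∫ x, f n x * exp (-x) ^ k) atTop (𝓝 (1 / (1 + (k:ℝ)))))
    {t : ℝ} (ht : 0 ≤ t) :
    Tendsto (fun n => ∫ x in Ioi t, f n x) atTop (𝓝 (exp (-t))) := by
  have hc : ContinuousAt (fun t : ℝ => exp (-t)) t := by fun_prop
  rw [tendsto_order]
  constructor
  · intro a ha
    obtain ⟨t2, h1, h2⟩ : ∃ t2, a < exp (-t2) ∧ t < t2 := by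
      have h1 := (hc.eventually (lt_mem_nhds ha)).filter_mono (nhdsWithin_le_nhds (s := Ioi t))
      exact (h1.and self_mem_nhdsWithin).exists
    have h3 := weak_conv hf hm (ramp_cont (exp (-t2)) (exp (-t)))
    have h4 : a < ∫ x, e0 x * ramp (exp (-t2)) (exp (-t)) (exp (-x)) := by
      refine lt_of_lt_of_le h1 ?_
      have h5 := (e0_posF.ramp_bd h2).1
      rwa [e0_tail_eq (ht.trans h2.le)] at h5
    filter_upwards [h3.eventually (lt_mem_nhds h4)] with n hn
    exact lt_of_lt_of_le hn ((hf n).ramp_bd h2).2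
  · intro a ha
    obtain ⟨t1, h1, h2⟩ : ∃ t1, exp (-t1) < a ∧ t1 < t := by
      have h1 := (hc.eventually (gt_mem_nhds ha)).filter_mono (nhdsWithin_le_nhds (s := Iio t))
      exact (h1.and self_mem_nhdsWithin).exists
    have h3 := weak_conv hf hm (ramp_cont (exp (-t)) (exp (-t1)))
    have h4 : ∫ x, e0 x * ramp (exp (-t)) (exp (-t1)) (exp (-x)) < a :=
      lt_of_le_of_lt (((e0_posF.ramp_bd h2).2).trans (e0_tail_le t1)) h1
    filter_upwards [h3.eventually (gt_mem_nhds h4)] with n hn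
    exact lt_of_le_of_lt ((hf n).ramp_bd h2).1 hn

variable {α : ℝ} {ε : ℕ → ℝ} {K : ℕ → ℝ → ℝ → ℝ}

lemma QF_conv (c : ∀ n, Core α (ε n) (K n) (f n)) (hε : Tendsto ε atTop (𝓝 0)) {p : ℝ} (hp : 0 < p) :
    Tendsto (fun n => QF (f n) p) atTop (𝓝 (p / (1 + p))) := by
  refine tendsto_of_tendsto_of_tendsto_of_le_of_le ?_ tendsto_const_nhds
    (fun n => (c n).QF_ge hp) (fun n => (c n).QF_le hp)
  have := (hε.mul_const (2 / (1 - α) * p ^ (1 - α) * p)).const_sub (p / (1 + p))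
  simpa using this

lemma m0_conv (c : ∀ n, Core α (ε n) (K n) (f n)) (hε : Tendsto ε atTop (𝓝 0)) :
    Tendsto (fun n => ∫ x, f n x) atTop (𝓝 1) := by
  rw [tendsto_order]
  constructor
  · intro a ha
    have h1 : Tendsto (fun n : ℕ => ((n:ℝ) + 1) / (1 + ((n:ℝ) + 1))) atTop (𝓝 1) := by
      have h2 : Tendsto (fun n : ℕ => (1:ℝ) - 1 / (1 + ((n:ℝ) + 1))) atTop (𝓝 (1 - 0)) := by
        refine Tendsto.const_sub 1 ?_
        simp_rw [one_div]
        refine tendsto_inv_atTop_zero.comp ?_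
        exact tendsto_atTop_add_const_left _ _
          (tendsto_atTop_add_const_right _ _ tendsto_natCast_atTop_atTop)
      rw [sub_zero] at h2
      refine h2.congr fun n => ?_
      have : (0:ℝ) ≤ n := by positivity
      field_simp
      ring
    obtain ⟨m, hm⟩ := (h1.eventually (lt_mem_nhds ha)).exists
    have hp : (0:ℝ) < (m:ℝ) + 1 := by positivity
    filter_upwards [(QF_conv c hε hp).eventually (lt_mem_nhds hm)] with n hn
    exact lt_of_lt_of_le hn ((c n).QF_le_m0 hp)
  · intro a ha
    exact Eventually.of_forall fun n => lt_of_le_of_lt (c n).m0_le ha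

lemma moment_conv (c : ∀ n, Core α (ε n) (K n) (f n)) (hε : Tendsto ε atTop (𝓝 0)) (k : ℕ) :
    Tendsto (fun n => ∫ x, f n x * exp (-x) ^ k) atTop (𝓝 (1 / (1 + (k:ℝ)))) := by
  rcases Nat.eq_zero_or_pos k with hk | hk
  · subst hk; simpa using m0_conv c hε
  · have hp : (0:ℝ) < k := by exact_mod_cast hk
    have := (m0_conv c hε).sub (QF_conv c hε hp)
    have e : 1 - (k:ℝ) / (1 + k) = 1 / (1 + k) := by field_simp; ring
    rw [e] at this
    refine this.congr fun n => ?_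
    unfold QF
    rw [← integral_sub (c n).int0 ((c n).int_fa hp)]
    refine integral_congr_ae (Eventually.of_forall fun x => ?_)
    simp only [aF]
    rw [← exp_nat_mul, mul_neg]
    ring

lemma Core.lower_pt {α ε : ℝ} {K : ℝ → ℝ → ℝ} {f : ℝ → ℝ} (c : Core α ε K f) :
    ∀ᵐ x : ℝ, 0 < x → ∀ N : ℕ, 0 < N →
      ∑ k ∈ Finset.range N, 2 * (x / N * k) *
        ((∫ z in Ioi (x / N * k), f z) - ∫ z in Ioi (x / N * (k + 1 : ℕ)), f z) *
        (∫ z in Ioi (x - x / N * k), f z) ≤ x ^ 2 * f x := by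
  filter_upwards [c.J_eq] with x hx hx0 N hN
  obtain ⟨hI, hE⟩ := hx hx0
  have hN' : (0:ℝ) < N := by exact_mod_cast hN
  set m : ℝ → ℝ := fun y => ∫ z, (SS x).indicator (GG K f) (y, z) with hm
  have hmi : Integrable m := hI.integral_prod_left
  have hmn : ∀ y, 0 ≤ m y := fun y =>
    integral_nonneg fun z => indicator_nonneg (fun w _ => c.GG_nonneg w) _
  have hs : ∑ k ∈ Finset.range N, ∫ y in (x / N * (k:ℕ))..(x / N * (k + 1 : ℕ)), m y =
      ∫ y in (x / N * (0:ℕ))..(x / N * (N:ℕ)), m y :=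
    intervalIntegral.sum_integral_adjacent_intervals (a := fun k : ℕ => x / N * k)
      (fun k _ => hmi.intervalIntegrable)
  have hle : ∫ y in (x / N * (0:ℕ))..(x / N * (N:ℕ)), m y ≤ x ^ 2 * f x := by
    rw [hE, intervalIntegral.integral_of_le (mul_le_mul_of_nonneg_left (by simp) (by positivity))]
    exact setIntegral_le_integral hmi (Eventually.of_forall hmn)
  refine le_trans ?_ hle
  rw [← hs]
  refine Finset.sum_le_sum fun k hk => ?_
  have hkN : k + 1 ≤ N := Finset.mem_range.1 hk
  have hkN' : ((k + 1 : ℕ) : ℝ) ≤ N := by exact_mod_cast hkN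
  set a := x / N * (k:ℕ) with ha
  set b := x / N * (k + 1 : ℕ) with hb
  have ha0 : 0 ≤ a := by positivity
  have hab : a ≤ b := by rw [ha, hb]; gcongr; simp
  have hbx : b ≤ x := by
    calc b ≤ x / N * N := by rw [hb]; gcongr
      _ = x := by field_simp
  have e1 : (∫ z in Ioi a, f z) - ∫ z in Ioi b, f z = ∫ y in Ioo a b, f y := by
    rw [← integral_Ioc_eq_integral_Ioo, ← Ioc_union_Ioi_eq_Ioi hab,
      setIntegral_union (Ioc_disjoint_Ioi le_rfl) measurableSet_Ioi c.int0.integrableOn c.int0.integrableOn]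
    ring
  rw [e1, intervalIntegral.integral_of_le hab, integral_Ioc_eq_integral_Ioo]
  have e2 : 2 * a * (∫ y in Ioo a b, f y) * (∫ z in Ioi (x - a), f z)
      = ∫ y in Ioo a b, (2 * a * (∫ z in Ioi (x - a), f z)) * f y := by
    rw [integral_const_mul]; ring
  rw [e2]
  refine setIntegral_mono_on_ae (c.int0.const_mul _).integrableOn hmi.integrableOn measurableSet_Ioo ?_
  filter_upwards [hI.prod_right_ae] with y hy hyab
  have hy0 : 0 < y := lt_of_le_of_lt ha0 hyab.1
  have hyn := c.nonneg y
  have e3 : 2 * a * (∫ z in Ioi (x - a), f z) * f y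
      = ∫ z, (Ioi (x - a)).indicator (fun z => 2 * a * f y * f z) z := by
    rw [integral_indicator measurableSet_Ioi, integral_const_mul]; ring
  rw [e3]
  refine integral_mono ((c.int0.const_mul _).indicator measurableSet_Ioi) hy fun z => ?_
  by_cases hz : z ∈ Ioi (x - a)
  · rw [indicator_of_mem hz]
    have hz : x - a < z := hz
    have hz0 : 0 < z := by linarith [hyab.1, hyab.2]
    have hw : (y, z) ∈ SS x := ⟨by linarith [hyab.2], show x < y + z by linarith [hyab.1]⟩
    simp only
    rw [indicator_of_mem hw]
    have hzn := c.nonneg z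
    have hK := c.Klow y z hy0 hz0
    have hya := hyab.1.le
    unfold GG
    calc 2 * a * f y * f z ≤ K y z * y * f y * f z := by gcongr
      _ = _ := by ring
  · rw [indicator_of_notMem hz]
    exact indicator_nonneg (fun w _ => c.GG_nonneg w) _

lemma sum_val (x : ℝ) (N : ℕ) (hN : 0 < N) :
    ∑ k ∈ Finset.range N, 2 * (x / N * k) *
      (exp (-(x / N * k)) - exp (-(x / N * (k + 1 : ℕ)))) * exp (-(x - x / N * k))
    = exp (-x) * ((N * (1 - exp (-(x / N)))) * (x * (1 - 1 / N))) := by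
  have hN' : (0:ℝ) < N := by exact_mod_cast hN
  have h1 : ∀ k : ℕ, 2 * (x / N * k) *
      (exp (-(x / N * k)) - exp (-(x / N * (k + 1 : ℕ)))) * exp (-(x - x / N * k))
      = (exp (-x) * (1 - exp (-(x / N))) * (x / N)) * (2 * k) := by
    intro k
    have a1 : exp (-(x / N * (k + 1 : ℕ))) = exp (-(x / N * k)) * exp (-(x / N)) := by
      rw [← exp_add]; congr 1; push_cast; ring
    have a2 : exp (-x) = exp (-(x / N * k)) * exp (-(x - x / N * k)) := by
      rw [← exp_add]; congr 1; ring
    rw [a1, a2]; ring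
  simp_rw [h1]
  rw [← Finset.mul_sum, ← Finset.mul_sum]
  have h2 : (2:ℝ) * ∑ k ∈ Finset.range N, (k:ℝ) = N * (N - 1) := by
    have := Finset.sum_range_id_mul_two N
    have h3 : ((∑ k ∈ Finset.range N, k : ℕ) : ℝ) * 2 = N * ((N - 1 : ℕ) : ℝ) := by exact_mod_cast this
    rw [Nat.cast_sub hN] at h3
    push_cast at h3
    linarith
  rw [h2]
  field_simp

lemma sum_lim {x : ℝ} (hx : 0 < x) :
    Tendsto (fun N : ℕ => exp (-x) * ((N * (1 - exp (-(x / N)))) * (x * (1 - 1 / (N:ℝ))))) atTop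
      (𝓝 (exp (-x) * x ^ 2)) := by
  have h1 : HasDerivAt (fun q => exp (-(q * x))) (exp (-(0 * x)) * (-(1 * x))) 0 :=
    (((hasDerivAt_id (0:ℝ)).mul_const x).neg).exp
  have h2 := hasDerivAt_iff_tendsto_slope_zero.1 h1
  have h3 : Tendsto (fun N : ℕ => ((N:ℝ))⁻¹) atTop (𝓝[≠] 0) := by
    rw [tendsto_nhdsWithin_iff]
    refine ⟨tendsto_inv_atTop_nhds_zero_nat, ?_⟩
    filter_upwards [eventually_gt_atTop 0] with N hN
    have : (0:ℝ) < N := by exact_mod_cast hN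
    simpa using this.ne'
  have h4 := (h2.comp h3).neg
  have h5 : Tendsto (fun N : ℕ => (N:ℝ) * (1 - exp (-(x / N)))) atTop (𝓝 x) := by
    have : -(exp (-(0 * x)) * (-(1 * x))) = x := by simp
    rw [this] at h4
    refine h4.congr fun N => ?_
    simp only [Function.comp, inv_inv, zero_add, smul_eq_mul, zero_mul, neg_zero, exp_zero]
    rw [inv_mul_eq_div]; ring
  have h6 : Tendsto (fun N : ℕ => x * (1 - 1 / (N:ℝ))) atTop (𝓝 x) := by
    have := (tendsto_one_div_atTop_nhds_zero_nat (𝕜 := ℝ)).const_sub 1 |>.const_mul x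
    simpa using this
  have := (h5.mul h6).const_mul (exp (-x))
  rwa [← sq] at this

lemma final_conv (c : ∀ n, Core α (ε n) (K n) (f n)) (hε : Tendsto ε atTop (𝓝 0)) :
    Tendsto (fun n => ∫ x in Ioi (0:ℝ), |f n x - exp (-x)|) atTop (𝓝 0) := by
  have ht : ∀ t, 0 ≤ t → Tendsto (fun n => ∫ x in Ioi t, f n x) atTop (𝓝 (exp (-t))) := fun t h =>
    tail_conv (fun n => (c n).posF) (moment_conv c hε) h
  have hpt : ∀ᵐ x : ℝ, 0 < x → ∀ a, a < exp (-x) → ∀ᶠ n in atTop, a < f n x := by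
    have := ae_all_iff.2 fun n => (c n).lower_pt
    filter_upwards [this] with x hx hx0 a ha
    have ha' : a * x ^ 2 < exp (-x) * x ^ 2 := by gcongr
    obtain ⟨N, hN, hN0⟩ := (((sum_lim hx0).eventually (lt_mem_nhds ha')).and
      (eventually_gt_atTop 0)).exists
    have hN' : (0:ℝ) < N := by exact_mod_cast hN0
    rw [← sum_val x N hN0] at hN
    have hl : Tendsto (fun n => ∑ k ∈ Finset.range N, 2 * (x / N * k) *
        ((∫ z in Ioi (x / N * k), f n z) - ∫ z in Ioi (x / N * (k + 1 : ℕ)), f n z) *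
        (∫ z in Ioi (x - x / N * k), f n z)) atTop (𝓝 (∑ k ∈ Finset.range N, 2 * (x / N * k) *
      (exp (-(x / N * k)) - exp (-(x / N * (k + 1 : ℕ)))) * exp (-(x - x / N * k)))) := by
      refine tendsto_finsetSum _ fun k hk => ?_
      have hkN : (k:ℝ) ≤ N := by exact_mod_cast (Finset.mem_range.1 hk).le
      have h3 : x / N * k ≤ x := by
        calc x / N * k ≤ x / N * N := by gcongr
          _ = x := by field_simp
      exact (((ht _ (by positivity)).sub (ht _ (by positivity))).const_mul _).mul (ht _ (by linarith))
    filter_upwards [hl.eventually (lt_mem_nhds hN)] with n hn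
    have := lt_of_lt_of_le hn (hx n hx0 N hN0)
    have hx2 : 0 < x ^ 2 := by positivity
    nlinarith
  have hd : Tendsto (fun n => ∫ x in Ioi (0:ℝ), max (exp (-x) - f n x) 0) atTop
      (𝓝 (∫ x in Ioi (0:ℝ), (0:ℝ))) := by
    refine tendsto_integral_of_dominated_convergence (fun x => exp (-x)) ?_ (integrableOn_exp_neg_Ioi 0) ?_ ?_
    · intro n
      have := (c n).meas
      exact Measurable.aestronglyMeasurable (by fun_prop)
    · intro n
      refine Eventually.of_forall fun x => ?_
      rw [norm_of_nonneg (le_max_right _ _)]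
      exact max_le (by linarith [(c n).nonneg x]) (exp_pos _).le
    · refine (ae_restrict_iff' measurableSet_Ioi).2 ?_
      filter_upwards [hpt] with x hx hx0
      rw [tendsto_order]
      constructor
      · intro a ha
        exact Eventually.of_forall fun n => lt_of_lt_of_le ha (le_max_right _ _)
      · intro a ha
        filter_upwards [hx hx0 (exp (-x) - a) (by linarith)] with n hn
        exact max_lt (by linarith) ha
  simp only [integral_zero] at hd
  have hd2 := hd.const_mul 2
  rw [mul_zero] at hd2
  refine squeeze_zero (fun n => integral_nonneg fun x => abs_nonneg _) (fun n => ?_) hd2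
  have i1 : IntegrableOn (f n) (Ioi 0) := (c n).int0.integrableOn
  have i2 := integrableOn_exp_neg_Ioi 0
  have i3 : IntegrableOn (fun x => f n x - exp (-x)) (Ioi 0) := i1.sub i2
  have i4 : IntegrableOn (fun x => max (exp (-x) - f n x) 0) (Ioi 0) := (i2.sub i1).pos_part
  have e : ∀ x, |f n x - exp (-x)| = (f n x - exp (-x)) + 2 * max (exp (-x) - f n x) 0 := by
    intro x
    rcases le_total (f n x) (exp (-x)) with h | h
    · rw [abs_of_nonpos (by linarith), max_eq_left (by linarith)]; ring
    · rw [abs_of_nonneg (by linarith), max_eq_right (by linarith)]; ring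
  simp_rw [e]
  rw [integral_add i3 (i4.const_mul 2), integral_sub i1 i2, integral_exp_neg_Ioi_zero, integral_const_mul]
  have : ∫ x in Ioi 0, f n x ≤ 1 :=
    (setIntegral_le_integral (c n).int0 (Eventually.of_forall (c n).nonneg)).trans (c n).m0_le
  linarith
end

lemma to_core {α ε : ℝ} (hα : α ∈ Ioo (0:ℝ) 1) {W : ℝ → ℝ → ℝ} (hW : GoodW α W) (hε : 0 < ε)
    {φ : ℝ → ℝ} (hp : IsProfile (Kern ε W) φ) (hn : IsNormalised φ)
    (hi : IntegrableOn φ (Ioi 0)) :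
    ∃ K f, Core α ε K f ∧ f =ᵐ[volume.restrict (Ioi (0:ℝ))] φ := by
  obtain ⟨-, h0, h1, he⟩ := hp
  obtain ⟨hWc, -, -, hWb⟩ := hW
  have hm : AEStronglyMeasurable φ (volume.restrict (Ioi (0:ℝ))) := hi.aestronglyMeasurable
  set f : ℝ → ℝ := (Ioi (0:ℝ)).indicator (fun x => max (hm.mk φ x) 0) with hf
  have fφ : f =ᵐ[volume.restrict (Ioi (0:ℝ))] φ := by
    filter_upwards [h0, hm.ae_eq_mk, ae_restrict_mem measurableSet_Ioi] with x h1 h2 h3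
    rw [hf, indicator_of_mem h3, ← h2, max_eq_left h1]
  have fφ' : ∀ᵐ x : ℝ, 0 < x → f x = φ x := (ae_restrict_iff' measurableSet_Ioi).1 fφ
  have fz : ∀ x, x ≤ 0 → f x = 0 := fun x hx => indicator_of_notMem (by simpa using hx) _
  have i0 : IntegrableOn f (Ioi 0) := hi.congr fφ.symm
  have xφ : (fun x => x * f x) =ᵐ[volume.restrict (Ioi (0:ℝ))] (fun x => x * φ x) := by
    filter_upwards [fφ] with x hx
    rw [hx]
  have i1 : IntegrableOn (fun x => x * f x) (Ioi 0) := h1.congr xφ.symm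
  set K : ℝ → ℝ → ℝ := fun x y => (Ioi (0:ℝ) ×ˢ Ioi (0:ℝ)).piecewise
    (fun p : ℝ × ℝ => 2 + ε * W p.1 p.2) (fun _ => 0) (x, y) with hK
  have Kval : ∀ x y, 0 < x → 0 < y → K x y = 2 + ε * W x y := fun x y hx hy =>
    piecewise_eq_of_mem _ _ _ (mk_mem_prod hx hy)
  refine ⟨K, f, ⟨hα, hε, ?_, ?_, fz, ?_, ?_, ?_, ?_, ?_, ?_, ?_⟩, fφ⟩
  · exact (hm.stronglyMeasurable_mk.measurable.max measurable_const).indicator measurableSet_Ioi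
  · intro x; exact indicator_nonneg (fun x _ => le_max_right _ _) x
  · exact (integrableOn_iff_integrable_of_support_subset (fun x hx => by
      by_contra h
      exact hx (fz x (by simpa using h)))).1 i0
  · exact (integrableOn_iff_integrable_of_support_subset (fun x hx => by
      by_contra h
      exact hx (by simp [fz x (by simpa using h)]))).1 i1
  · rw [← setIntegral_eq_integral_of_forall_compl_eq_zero (s := Ioi (0:ℝ)), integral_congr_ae xφ]
    · exact hn
    · intro x hx
      rw [fz x (by simpa using hx), mul_zero]
  · have : ContinuousOn (fun p : ℝ × ℝ => 2 + ε * W p.1 p.2) (Ioi (0:ℝ) ×ˢ Ioi (0:ℝ)) :=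
      continuousOn_const.add (continuousOn_const.mul hWc)
    exact this.measurable_piecewise continuousOn_const (measurableSet_Ioi.prod measurableSet_Ioi)
  · intro x y hx hy
    rw [Kval x y hx hy]
    have := mul_nonneg hε.le (hWb x y hx hy).1
    linarith
  · intro x y hx hy
    rw [Kval x y hx hy]
    have := mul_le_mul_of_nonneg_left (hWb x y hx hy).2 hε.le
    linarith
  · filter_upwards [(ae_restrict_iff' measurableSet_Ioi).1 he, fφ'] with x hx hx2 hx0
    rw [hx2 hx0, hx hx0]
    refine integral_congr_ae ?_
    refine (ae_restrict_iff' measurableSet_Ioo).2 ?_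
    filter_upwards [fφ'] with y hy hyx
    refine integral_congr_ae ?_
    refine (ae_restrict_iff' measurableSet_Ioi).2 ?_
    filter_upwards [fφ'] with z hz hzx
    have hz0 : 0 < z := by
      have h1 : x - y < z := hzx
      linarith [hyx.2]
    beta_reduce
    rw [hz hz0, hy hyx.1, Kval y z hyx.1 hz0, Kern]

theorem stmt7 (α : ℝ) (hα : α ∈ Ioo (0:ℝ) 1) (W : ℝ → ℝ → ℝ) (hW : GoodW α W)
    (δ : ℝ) (hδ : 0 < δ) :
    ∃ εstar > (0:ℝ), ∀ ε : ℝ, 0 < ε → ε < εstar →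
      ∀ φ : ℝ → ℝ, IsProfile (Kern ε W) φ → IsNormalised φ →
        ∫ x in Ioi (0:ℝ), |φ x - exp (-x)| < δ := by
  by_contra hcon
  push Not at hcon
  have h1 : ∀ n : ℕ, ∃ ε : ℝ, 0 < ε ∧ ε < 1 / ((n:ℝ) + 1) ∧ ∃ K f, Core α ε K f ∧
      δ ≤ ∫ x in Ioi (0:ℝ), |f x - exp (-x)| := by
    intro n
    obtain ⟨ε, h0, h1, φ, hp, hn, hd⟩ := hcon (1 / ((n:ℝ) + 1)) (by positivity)
    have hm : AEStronglyMeasurable φ (volume.restrict (Ioi (0:ℝ))) := hp.1.aestronglyMeasurable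
    have habsint : Integrable (fun x => |φ x - exp (-x)|) (volume.restrict (Ioi (0:ℝ))) := by
      by_contra hni
      rw [integral_undef hni] at hd
      linarith
    have ei := integrableOn_exp_neg_Ioi 0
    have hs : Integrable (fun x => φ x - exp (-x)) (volume.restrict (Ioi (0:ℝ))) :=
      (integrable_norm_iff (hm.sub ei.aestronglyMeasurable)).1 habsint
    have hi : IntegrableOn φ (Ioi 0) := by
      have := hs.add ei
      refine this.congr (Eventually.of_forall fun x => ?_)
      simp
    obtain ⟨K, f, hc, hf⟩ := to_core hα hW h0 hp hn hi
    refine ⟨ε, h0, h1, K, f, hc, hd.trans (le_of_eq ?_)⟩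
    refine integral_congr_ae ?_
    filter_upwards [hf] with x hx
    rw [hx]
  choose ε h0 hε K f hc hd using h1
  have hε0 : Tendsto ε atTop (nhds 0) :=
    squeeze_zero (fun n => (h0 n).le) (fun n => (hε n).le) tendsto_one_div_add_atTop_nhds_zero_nat
  obtain ⟨n, hn⟩ := ((final_conv hc hε0).eventually (gt_mem_nhds hδ)).exists
  exact absurd hn (not_lt.2 (hd n))
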